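/- Let f : ℝ^D → ℝ^D be L-Lipschitz with ‖f‖ ≤ M everywhere, let φ be the flow of y' = f(y), and let f_s, φ_s denote s-th components. Then for any z ∈ ℝ^D, time t, step h > 0, integer k ≥ 1 with weights w_j = 6 j² / (k(k+1)(2k+1)), the deterministic symmetric finite-difference approximation satisfies |∑_{j=1}^k w_j (φ_s(z, t + j h) − φ_s(z, t − j h)) / (2 j h) − f_s(φ(z, t))| ≤ (3/2) L M k h. -/

import Mathlib

theorem weight_sum_aux (k : ℕ) :
    ∑ j ∈ Finset.Icc 1 k, 6 * (j : ℝ) ^ 2 = (k : ℝ) * ((k : ℝ) + 1) * (2 * (k : ℝ) + 1) := by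
  induction k with
  | zero => simp
  | succ n ih =>
    rw [Finset.sum_Icc_succ_top (by omega), ih]
    push_cast
    ring

/-- Deterministic bias bound for the weighted symmetric finite-difference approximation of
the derivative of the flow of an `L`-Lipschitz, `M`-bounded vector field:
`|∑_{j=1}^k w_j (φ_s(z, t+jh) − φ_s(z, t−jh))/(2jh) − f_s(φ(z,t))| ≤ (3/2) L M k h`. -/
theorem stmt_6 {D : ℕ} (L M h : ℝ) (hL : 0 < L) (hM : 0 < M) (hh : 0 < h)
    (f : EuclideanSpace ℝ (Fin D) → EuclideanSpace ℝ (Fin D))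
    (hf : LipschitzWith (Real.toNNReal L) f) (hfM : ∀ z, ‖f z‖ ≤ M)
    (φ : EuclideanSpace ℝ (Fin D) → ℝ → EuclideanSpace ℝ (Fin D))
    (hflow : ∀ z t, HasDerivAt (φ z) (f (φ z t)) t)
    (hinit : ∀ z, φ z 0 = z)
    (k : ℕ) (hk : 1 ≤ k) (z : EuclideanSpace ℝ (Fin D)) (t : ℝ) (s : Fin D) :
    |∑ j ∈ Finset.Icc 1 k,
        (6 * (j : ℝ) ^ 2 / ((k : ℝ) * ((k : ℝ) + 1) * (2 * (k : ℝ) + 1))) *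
          ((φ z (t + (j : ℝ) * h) s - φ z (t - (j : ℝ) * h) s) / (2 * (j : ℝ) * h))
      - f (φ z t) s| ≤ (3 / 2) * L * M * (k : ℝ) * h := by
  have hlip : ∀ u, ‖φ z u - φ z t‖ ≤ M * ‖u - t‖ := fun u =>
    Convex.norm_image_sub_le_of_norm_hasDerivWithin_le (s := Set.univ)
      (fun x _ => (hflow z x).hasDerivWithinAt) (fun x _ => hfM _) convex_univ
      (Set.mem_univ _) (Set.mem_univ _)
  have hff : ∀ u, ‖f (φ z u) - f (φ z t)‖ ≤ L * (M * |u - t|) := by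
    intro u
    have h1 := hf.norm_sub_le (φ z u) (φ z t)
    rw [Real.coe_toNNReal L hL.le] at h1
    exact h1.trans (mul_le_mul_of_nonneg_left (hlip u) hL.le)
  have key : ∀ a : ℝ, 0 < a →
      |(φ z (t + a) s - φ z (t - a) s) / (2 * a) - f (φ z t) s| ≤ L * M * a := by
    intro a ha
    have hd : ∀ x ∈ Set.Icc (t - a) (t + a),
        HasDerivWithinAt (fun u => φ z u - u • f (φ z t)) (f (φ z x) - f (φ z t))
          (Set.Icc (t - a) (t + a)) x := by
      intro x _
      have h2 := (hflow z x).sub ((hasDerivAt_id x).smul_const (f (φ z t)))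
      rw [one_smul] at h2
      exact h2.hasDerivWithinAt
    have hb : ∀ x ∈ Set.Icc (t - a) (t + a), ‖f (φ z x) - f (φ z t)‖ ≤ L * M * a := by
      intro x hx
      have h3 : |x - t| ≤ a := abs_le.2 ⟨by linarith [hx.1], by linarith [hx.2]⟩
      calc _ ≤ L * (M * |x - t|) := hff x
        _ ≤ L * (M * a) := by gcongr
        _ = _ := by ring
    have h4 := Convex.norm_image_sub_le_of_norm_hasDerivWithin_le hd hb (convex_Icc _ _)
      (Set.left_mem_Icc.2 (by linarith)) (Set.right_mem_Icc.2 (by linarith))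
    have h5 := (PiLp.norm_apply_le _ s).trans h4
    have e1 : t + a - (t - a) = 2 * a := by ring
    simp only [PiLp.sub_apply, PiLp.smul_apply, smul_eq_mul, Real.norm_eq_abs, e1] at h5
    rw [abs_of_pos (by linarith : (0 : ℝ) < 2 * a)] at h5
    have e2 : (φ z (t + a) s - φ z (t - a) s) / (2 * a) - f (φ z t) s =
        (φ z (t + a) s - (t + a) * f (φ z t) s - (φ z (t - a) s - (t - a) * f (φ z t) s))
          / (2 * a) := by
      field_simp
      ring
    rw [e2, abs_div, abs_of_pos (by linarith : (0 : ℝ) < 2 * a), div_le_iff₀ (by linarith)]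
    exact h5
  have hk0 : (0 : ℝ) < k := by exact_mod_cast hk
  have hS : (0 : ℝ) < (k : ℝ) * ((k : ℝ) + 1) * (2 * (k : ℝ) + 1) := by positivity
  have hw : ∑ j ∈ Finset.Icc 1 k,
      (6 * (j : ℝ) ^ 2 / ((k : ℝ) * ((k : ℝ) + 1) * (2 * (k : ℝ) + 1))) = 1 := by
    rw [← Finset.sum_div, weight_sum_aux, div_self hS.ne']
  generalize (k : ℝ) * ((k : ℝ) + 1) * (2 * (k : ℝ) + 1) = S at *
  have e3 : f (φ z t) s = ∑ j ∈ Finset.Icc 1 k, (6 * (j : ℝ) ^ 2 / S) * f (φ z t) s := by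
    rw [← Finset.sum_mul, hw, one_mul]
  rw [e3, ← Finset.sum_sub_distrib]
  have hle : ∀ j ∈ Finset.Icc 1 k,
      |(6 * (j : ℝ) ^ 2 / S) *
          ((φ z (t + (j : ℝ) * h) s - φ z (t - (j : ℝ) * h) s) / (2 * (j : ℝ) * h))
        - (6 * (j : ℝ) ^ 2 / S) * f (φ z t) s| ≤ (6 * (j : ℝ) ^ 2 / S) * (L * M * (k * h)) := by
    intro j hj
    obtain ⟨hj1, hj2⟩ := Finset.mem_Icc.1 hj
    have hj0 : (0 : ℝ) < j := by exact_mod_cast hj1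
    have hjk : (j : ℝ) ≤ k := by exact_mod_cast hj2
    rw [← mul_sub, abs_mul, abs_of_nonneg (by positivity : 0 ≤ 6 * (j : ℝ) ^ 2 / S), mul_assoc 2]
    refine mul_le_mul_of_nonneg_left ((key _ (mul_pos hj0 hh)).trans ?_) (by positivity)
    gcongr
  refine (Finset.abs_sum_le_sum_abs _ _).trans ((Finset.sum_le_sum hle).trans ?_)
  rw [← Finset.sum_mul, hw]
  have : 0 < L * M * k * h := by positivity
  linarith
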